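/- arXiv:2502.11033 — 5 statements merged into one kernel-verified Lean document; each statement's English description precedes it below -/
import Mathlib

section
/- Local smoothness of the value function: let π : S → Δ(A) be any policy with ε := min_{s,a} π_{s,a} > 0. Then for any policy π̃ : S → Δ(A): |V(π̃) − V(π) − ⟨∇V(π), π̃ − π⟩| ≤ min{ (H³/√ε) ‖π̃ − π‖²_{L²(μ^π),1}, (A H³/√ε) ‖π̃ − π‖²_{L²(μ^π),2} }. -/
open scoped BigOperators Classical

noncomputable section

/-- A discounted MDP with finite state space `S` and finite action set `A`.
`r` is interpreted as a cost in `[0,1]`. -/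
structure MDP (S A : Type) [Fintype S] [Fintype A] where
  P : S → A → S → ℝ
  P_nonneg : ∀ s a s', 0 ≤ P s a s'
  P_sum_one : ∀ s a, ∑ s', P s a s' = 1
  r : S → A → ℝ
  r_nonneg : ∀ s a, 0 ≤ r s a
  r_le_one : ∀ s a, r s a ≤ 1
  gamma : ℝ
  gamma_pos : 0 < gamma
  gamma_lt_one : gamma < 1
  rho0 : S → ℝ
  rho0_nonneg : ∀ s, 0 ≤ rho0 s
  rho0_sum_one : ∑ s, rho0 s = 1

variable {S A : Type} [Fintype S] [Fintype A]

/-- `π` is a policy: a probability distribution over actions at every state. -/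
def IsPolicy (π : S → A → ℝ) : Prop :=
  (∀ s a, 0 ≤ π s a) ∧ ∀ s, ∑ a, π s a = 1

namespace MDP

/-- Effective horizon `H = 1/(1-γ)`. -/
def horizon (M : MDP S A) : ℝ := 1 / (1 - M.gamma)

/-- One-step evolution of a state distribution under policy `π`. -/
def stepDist (M : MDP S A) (π : S → A → ℝ) (d : S → ℝ) : S → ℝ :=
  fun s' => ∑ s, ∑ a, d s * π s a * M.P s a s'

/-- State distribution at time `t` under `π` with start distribution `ρ`. -/
def distAt (M : MDP S A) (π : S → A → ℝ) (ρ : S → ℝ) (t : ℕ) : S → ℝ :=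
  (M.stepDist π)^[t] ρ

/-- Expected one-step cost under state distribution `d` and policy `π`. -/
def expCost (M : MDP S A) (π : S → A → ℝ) (d : S → ℝ) : ℝ :=
  ∑ s, ∑ a, d s * π s a * M.r s a

/-- Discounted value `V_ρ(π) = Σ_t γ^t E[r(s_t,a_t)]` with start-state distribution `ρ`. -/
def valueFrom (M : MDP S A) (π : S → A → ℝ) (ρ : S → ℝ) : ℝ :=
  ∑' t : ℕ, M.gamma ^ t * M.expCost π (M.distAt π ρ t)

/-- Value starting from state `s`. -/
def valueAt (M : MDP S A) (π : S → A → ℝ) (s : S) : ℝ :=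
  M.valueFrom π (fun s' => if s' = s then 1 else 0)

/-- Value from the initial state distribution `ρ0`. -/
def value (M : MDP S A) (π : S → A → ℝ) : ℝ := M.valueFrom π M.rho0

/-- Action-value (Q) function. -/
def Qfun (M : MDP S A) (π : S → A → ℝ) (s : S) (a : A) : ℝ :=
  M.r s a + M.gamma * ∑ s', M.P s a s' * M.valueAt π s'

/-- Discounted state-occupancy measure with start distribution `ρ`. -/
def occFrom (M : MDP S A) (π : S → A → ℝ) (ρ : S → ℝ) (s : S) : ℝ :=
  (1 - M.gamma) * ∑' t : ℕ, M.gamma ^ t * M.distAt π ρ t s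

/-- Discounted state-occupancy measure from the initial distribution. -/
def occ (M : MDP S A) (π : S → A → ℝ) : S → ℝ := M.occFrom π M.rho0

/-- Policy gradient in the direct parametrization:
`(∇V(π))_{s,a} = H μ^π(s) Q^π_{s,a}` (policy gradient theorem). -/
def gradV (M : MDP S A) (π : S → A → ℝ) : S → A → ℝ :=
  fun s a => M.horizon * M.occ π s * M.Qfun π s a

end MDP

/-- Inner product on `ℝ^A`. -/
def innerA (u v : A → ℝ) : ℝ := ∑ a, u a * v a

/-- Inner product on `ℝ^{S×A}`. -/
def innerSA (u v : S → A → ℝ) : ℝ := ∑ s, ∑ a, u s a * v s a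

/-- `PC` satisfies `(C, eps)`-variational gradient dominance w.r.t. `M`. -/
def IsVGD (M : MDP S A) (PC : Set (S → A → ℝ)) (C eps : ℝ) : Prop :=
  ∀ π ∈ PC, M.value π - sInf (M.value '' PC) ≤
    C * sSup ((fun π' => innerSA (M.gradV π) (fun s a => π s a - π' s a)) '' PC) + eps

/-- The ε-greedy exploratory class `Π^ε = {(1-ε)π + ε·u : π ∈ Π}`, `u` uniform. -/
def greedyClass (PC : Set (S → A → ℝ)) (ε : ℝ) : Set (S → A → ℝ) :=
  (fun π => fun s a => (1 - ε) * π s a + ε / (Fintype.card A : ℝ)) '' PC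

/-- Weighted norm `‖u‖_{L²(μ),1} = √(E_{s∼μ} ‖u_s‖₁²)`. -/
def wnorm1 (μ : S → ℝ) (u : S → A → ℝ) : ℝ :=
  Real.sqrt (∑ s, μ s * (∑ a, |u s a|) ^ 2)

/-- Weighted norm `‖u‖_{L²(μ),2} = √(E_{s∼μ} ‖u_s‖₂²)`. -/
def wnorm2 (μ : S → ℝ) (u : S → A → ℝ) : ℝ :=
  Real.sqrt (∑ s, μ s * ∑ a, (u s a) ^ 2)

/-- `N` is a norm on `ℝ^A`. -/
def IsNormA (N : (A → ℝ) → ℝ) : Prop :=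
  (∀ x, 0 ≤ N x) ∧ (∀ x, N x = 0 ↔ x = 0) ∧
    (∀ (c : ℝ) (x : A → ℝ), N (c • x) = |c| * N x) ∧ ∀ x y, N (x + y) ≤ N x + N y

/-- Dual norm of a norm `N` on `ℝ^A`. -/
def dualNormA (N : (A → ℝ) → ℝ) (z : A → ℝ) : ℝ :=
  sSup ((fun u => innerA z u) '' {u | N u ≤ 1})

/-- Weighted norm `‖u‖_{L²(μ),∘} = √(E_{s∼μ} ‖u_s‖∘²)` for an action-space norm `N`. -/
def wnormN (μ : S → ℝ) (N : (A → ℝ) → ℝ) (u : S → A → ℝ) : ℝ :=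
  Real.sqrt (∑ s, μ s * (N (u s)) ^ 2)

/-- Bregman divergence on `ℝ^A` of `R` whose gradient is `gR`. -/
def bregA (R : (A → ℝ) → ℝ) (gR : (A → ℝ) → A → ℝ) (u v : A → ℝ) : ℝ :=
  R u - R v - innerA (gR v) (u - v)

/-- The probability simplex `Δ(B)`. -/
def simplexA (B : Type) [Fintype B] : Set (B → ℝ) :=
  {p | (∀ b, 0 ≤ p b) ∧ ∑ b, p b = 1}


namespace MDP

def IsD (d : S → ℝ) : Prop := (∀ s, 0 ≤ d s) ∧ ∑ s, d s = 1

theorem isD_step (M : MDP S A) {π : S → A → ℝ} (hπ : IsPolicy π) {d : S → ℝ} (hd : IsD d) :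
    IsD (M.stepDist π d) := by
  constructor
  · intro s'
    exact Finset.sum_nonneg fun s _ => Finset.sum_nonneg fun a _ =>
      mul_nonneg (mul_nonneg (hd.1 s) (hπ.1 s a)) (M.P_nonneg s a s')
  · unfold stepDist
    rw [Finset.sum_comm]
    rw [← hd.2]
    refine Finset.sum_congr rfl fun s _ => ?_
    rw [Finset.sum_comm]
    simp_rw [← Finset.mul_sum, M.P_sum_one, mul_one]
    rw [← Finset.mul_sum, hπ.2, mul_one]

theorem isD_dist (M : MDP S A) {π : S → A → ℝ} (hπ : IsPolicy π) {d : S → ℝ} (hd : IsD d)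
    (t : ℕ) : IsD (M.distAt π d t) := by
  induction t with
  | zero => exact hd
  | succ n ih =>
    unfold distAt
    rw [Function.iterate_succ_apply']
    exact M.isD_step hπ ih

theorem isD_delta (s : S) : IsD (fun s' => if s' = s then (1:ℝ) else 0) := by
  constructor
  · intro s'; dsimp only; split_ifs <;> norm_num
  · simp

theorem IsD.le_one {d : S → ℝ} (hd : IsD d) (s : S) : d s ≤ 1 := by
  rw [← hd.2]
  exact Finset.single_le_sum (fun i _ => hd.1 i) (Finset.mem_univ s)

theorem expCost_nonneg (M : MDP S A) {π : S → A → ℝ} (hπ : IsPolicy π) {d : S → ℝ} (hd : IsD d) :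
    0 ≤ M.expCost π d :=
  Finset.sum_nonneg fun s _ => Finset.sum_nonneg fun a _ =>
      mul_nonneg (mul_nonneg (hd.1 s) (hπ.1 s a)) (M.r_nonneg s a)

theorem expCost_le (M : MDP S A) {π : S → A → ℝ} (hπ : IsPolicy π) {d : S → ℝ} (hd : IsD d) :
    M.expCost π d ≤ 1 := by
  calc M.expCost π d ≤ ∑ s, ∑ a, d s * π s a :=
        Finset.sum_le_sum fun s _ => Finset.sum_le_sum fun a _ =>
          mul_le_of_le_one_right (mul_nonneg (hd.1 s) (hπ.1 s a)) (M.r_le_one s a)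
    _ = 1 := by simp_rw [← Finset.mul_sum, hπ.2, mul_one]; exact hd.2

theorem summ (M : MDP S A) {f : ℕ → ℝ} (h0 : ∀ t, 0 ≤ f t) (h1 : ∀ t, f t ≤ 1) :
    Summable fun t => M.gamma ^ t * f t :=
  Summable.of_nonneg_of_le (fun t => mul_nonneg (pow_nonneg M.gamma_pos.le t) (h0 t))
    (fun t => mul_le_of_le_one_right (pow_nonneg M.gamma_pos.le t) (h1 t))
    (summable_geometric_of_lt_one M.gamma_pos.le M.gamma_lt_one)

theorem summ_cost (M : MDP S A) {π : S → A → ℝ} (hπ : IsPolicy π) {d : S → ℝ} (hd : IsD d) :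
    Summable fun t => M.gamma ^ t * M.expCost π (M.distAt π d t) :=
  M.summ (fun t => M.expCost_nonneg hπ (M.isD_dist hπ hd t))
    (fun t => M.expCost_le hπ (M.isD_dist hπ hd t))

theorem valueFrom_nonneg (M : MDP S A) {π : S → A → ℝ} (hπ : IsPolicy π) {d : S → ℝ}
    (hd : IsD d) : 0 ≤ M.valueFrom π d :=
  tsum_nonneg fun t => mul_nonneg (pow_nonneg M.gamma_pos.le t)
    (M.expCost_nonneg hπ (M.isD_dist hπ hd t))

theorem valueFrom_le (M : MDP S A) {π : S → A → ℝ} (hπ : IsPolicy π) {d : S → ℝ}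
    (hd : IsD d) : M.valueFrom π d ≤ M.horizon := by
  unfold horizon
  rw [one_div, ← tsum_geometric_of_lt_one M.gamma_pos.le M.gamma_lt_one]
  exact (M.summ_cost hπ hd).tsum_le_tsum
    (fun t => mul_le_of_le_one_right (pow_nonneg M.gamma_pos.le t)
      (M.expCost_le hπ (M.isD_dist hπ hd t)))
    (summable_geometric_of_lt_one M.gamma_pos.le M.gamma_lt_one)

theorem distAt_lin (M : MDP S A) (π : S → A → ℝ) (d : S → ℝ) (t : ℕ) (s' : S) :
    M.distAt π d t s' = ∑ s, d s * M.distAt π (fun x => if x = s then 1 else 0) t s' := by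
  induction t generalizing s' with
  | zero => simp [distAt]
  | succ n ih =>
    have e : ∀ d : S → ℝ, M.distAt π d (n+1) s' =
        ∑ s, ∑ a, M.distAt π d n s * π s a * M.P s a s' := by
      intro d
      unfold distAt
      rw [Function.iterate_succ_apply']
      rfl
    simp_rw [e]
    rw [show (∑ s, ∑ a, M.distAt π d n s * π s a * M.P s a s') =
      ∑ s, ∑ a, ∑ x, d x * (M.distAt π (fun y => if y = x then 1 else 0) n s * π s a * M.P s a s')
      from Finset.sum_congr rfl fun s _ => Finset.sum_congr rfl fun a _ => by
        rw [ih, Finset.sum_mul, Finset.sum_mul]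
        exact Finset.sum_congr rfl fun x _ => by ring]
    simp_rw [Finset.mul_sum]
    exact (Finset.sum_congr rfl fun s _ => Finset.sum_comm).trans Finset.sum_comm

theorem valueFrom_lin (M : MDP S A) {π : S → A → ℝ} (hπ : IsPolicy π) (d : S → ℝ) :
    M.valueFrom π d = ∑ s, d s * M.valueAt π s := by
  unfold valueAt valueFrom
  simp_rw [← tsum_mul_left]
  rw [← Summable.tsum_finsetSum fun s _ => (M.summ_cost hπ (isD_delta s)).mul_left (d s)]
  refine tsum_congr fun t => ?_
  have : M.expCost π (M.distAt π d t) =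
      ∑ x, d x * M.expCost π (M.distAt π (fun y => if y = x then 1 else 0) t) := by
    unfold expCost
    simp_rw [Finset.mul_sum]
    symm
    rw [Finset.sum_comm]
    refine Finset.sum_congr rfl fun s _ => ?_
    rw [Finset.sum_comm]
    refine Finset.sum_congr rfl fun a _ => ?_
    symm
    rw [distAt_lin, Finset.sum_mul, Finset.sum_mul]
    exact Finset.sum_congr rfl fun x _ => by ring
  rw [this, Finset.mul_sum]
  exact Finset.sum_congr rfl fun x _ => by ring

theorem bellman (M : MDP S A) {π : S → A → ℝ} (hπ : IsPolicy π) (s : S) :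
    M.valueAt π s = ∑ a, π s a * M.Qfun π s a := by
  have h : M.valueAt π s = M.expCost π (fun x => if x = s then 1 else 0) +
      M.gamma * M.valueFrom π (M.stepDist π (fun x => if x = s then 1 else 0)) := by
    unfold valueAt valueFrom
    rw [(M.summ_cost hπ (isD_delta s)).tsum_eq_zero_add, ← tsum_mul_left]
    congr 1
    · simp [distAt]
    · refine tsum_congr fun t => ?_
      unfold distAt
      rw [Function.iterate_succ_apply, pow_succ]
      ring
  rw [h, M.valueFrom_lin hπ]
  have e1 : M.expCost π (fun x => if x = s then 1 else 0) = ∑ a, π s a * M.r s a := by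
    unfold expCost
    rw [Finset.sum_eq_single s] <;> simp +contextual
  have e2 : ∀ s', M.stepDist π (fun x => if x = s then 1 else 0) s' =
      ∑ a, π s a * M.P s a s' := by
    intro s'
    unfold stepDist
    rw [Finset.sum_eq_single s] <;> simp +contextual
  rw [e1]
  simp_rw [e2, Qfun, mul_add, Finset.sum_add_distrib, Finset.sum_mul, Finset.mul_sum]
  rw [Finset.sum_comm]
  congr 1
  refine Finset.sum_congr rfl fun a _ => Finset.sum_congr rfl fun x _ => by ring

theorem Q_nonneg (M : MDP S A) {π : S → A → ℝ} (hπ : IsPolicy π) (s : S) (a : A) :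
    0 ≤ M.Qfun π s a :=
  add_nonneg (M.r_nonneg s a) (mul_nonneg M.gamma_pos.le (Finset.sum_nonneg fun x _ =>
    mul_nonneg (M.P_nonneg s a x) (M.valueFrom_nonneg hπ (isD_delta x))))

theorem horizon_pos (M : MDP S A) : 0 < M.horizon :=
  one_div_pos.2 (sub_pos.2 M.gamma_lt_one)

theorem horizon_mul (M : MDP S A) : M.horizon * (1 - M.gamma) = 1 := by
  have := sub_pos.2 M.gamma_lt_one
  unfold horizon; field_simp

theorem Q_le (M : MDP S A) {π : S → A → ℝ} (hπ : IsPolicy π) (s : S) (a : A) :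
    M.Qfun π s a ≤ M.horizon := by
  have h : ∑ x, M.P s a x * M.valueAt π x ≤ M.horizon := by
    calc _ ≤ ∑ x, M.P s a x * M.horizon := Finset.sum_le_sum fun x _ =>
          mul_le_mul_of_nonneg_left (M.valueFrom_le hπ (isD_delta x)) (M.P_nonneg s a x)
      _ = _ := by rw [← Finset.sum_mul, M.P_sum_one, one_mul]
  have h2 := mul_le_mul_of_nonneg_left h M.gamma_pos.le
  have := M.horizon_mul
  have := M.r_le_one s a
  unfold Qfun
  linarith

/-- unnormalized occupancy -/
def nu (M : MDP S A) (π : S → A → ℝ) (s : S) : ℝ := ∑' t : ℕ, M.gamma ^ t * M.distAt π M.rho0 t s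

theorem occ_eq (M : MDP S A) (π : S → A → ℝ) (s : S) : M.occ π s = (1 - M.gamma) * M.nu π s := rfl

theorem isD_rho (M : MDP S A) : IsD M.rho0 := ⟨M.rho0_nonneg, M.rho0_sum_one⟩

theorem nu_nonneg (M : MDP S A) {π : S → A → ℝ} (hπ : IsPolicy π) (s : S) : 0 ≤ M.nu π s :=
  tsum_nonneg fun t => mul_nonneg (pow_nonneg M.gamma_pos.le t) ((M.isD_dist hπ M.isD_rho t).1 s)

theorem nu_flow (M : MDP S A) {π : S → A → ℝ} (hπ : IsPolicy π) (s' : S) :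
    M.nu π s' = M.rho0 s' + M.gamma * ∑ s, ∑ a, M.nu π s * π s a * M.P s a s' := by
  have hs : ∀ s, Summable fun t => M.gamma ^ t * M.distAt π M.rho0 t s := fun s =>
    M.summ (fun t => (M.isD_dist hπ M.isD_rho t).1 s) (fun t => (M.isD_dist hπ M.isD_rho t).le_one s)
  have e : ∑ s, ∑ a, M.nu π s * π s a * M.P s a s' =
      ∑' t, M.gamma ^ t * M.distAt π M.rho0 (t+1) s' := by
    unfold nu
    simp_rw [← tsum_mul_right]
    rw [Finset.sum_congr rfl fun s _ => (Summable.tsum_finsetSum fun a _ =>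
      ((hs s).mul_right (π s a)).mul_right (M.P s a s')).symm]
    rw [← Summable.tsum_finsetSum fun s _ => summable_sum fun a _ =>
      ((hs s).mul_right (π s a)).mul_right (M.P s a s')]
    refine tsum_congr fun t => ?_
    have : M.distAt π M.rho0 (t+1) s' =
        ∑ s, ∑ a, M.distAt π M.rho0 t s * π s a * M.P s a s' := by
      unfold distAt
      rw [Function.iterate_succ_apply']
      rfl
    rw [this]
    simp_rw [Finset.mul_sum]
    exact Finset.sum_congr rfl fun s _ => Finset.sum_congr rfl fun a _ => by ring
  rw [e, ← tsum_mul_left]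
  unfold nu
  rw [(hs s').tsum_eq_zero_add]
  congr 1
  · simp [distAt]
  · exact tsum_congr fun t => by rw [pow_succ]; ring

theorem nu_test (M : MDP S A) {π : S → A → ℝ} (hπ : IsPolicy π) (f : S → ℝ) :
    ∑ s, M.nu π s * f s = ∑ s, M.rho0 s * f s +
      M.gamma * ∑ s, M.nu π s * ∑ a, π s a * ∑ x, M.P s a x * f x := by
  have : ∑ s, M.nu π s * f s = ∑ s', (M.rho0 s' * f s' +
      M.gamma * ∑ s, ∑ a, M.nu π s * π s a * M.P s a s' * f s') := by
    refine Finset.sum_congr rfl fun s' _ => ?_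
    rw [M.nu_flow hπ s', add_mul, mul_assoc]
    simp_rw [Finset.sum_mul]
  rw [this, Finset.sum_add_distrib, ← Finset.mul_sum]
  congr 2
  simp_rw [Finset.mul_sum]
  rw [Finset.sum_comm]
  refine Finset.sum_congr rfl fun s _ => ?_
  rw [Finset.sum_comm]
  exact Finset.sum_congr rfl fun a _ => Finset.sum_congr rfl fun x _ => by ring

end MDP

theorem half_bound (q d : A → ℝ) (H : ℝ) (h0 : ∀ a, 0 ≤ q a) (h1 : ∀ a, q a ≤ H)
    (hd : ∑ a, d a = 0) : |∑ a, d a * q a| ≤ H / 2 * ∑ a, |d a| := by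
  have : ∑ a, d a * q a = ∑ a, d a * (q a - H / 2) := by
    simp_rw [mul_sub, Finset.sum_sub_distrib, ← Finset.sum_mul, hd]; ring
  rw [this, Finset.mul_sum]
  refine (Finset.abs_sum_le_sum_abs _ _).trans (Finset.sum_le_sum fun a _ => ?_)
  rw [abs_mul, mul_comm]
  refine mul_le_mul_of_nonneg_right (abs_le.2 ⟨?_, ?_⟩) (abs_nonneg _) <;>
    linarith [h0 a, h1 a]

theorem jensen {B : Type} [Fintype B] (w f : B → ℝ) (h0 : ∀ b, 0 ≤ w b) (h1 : ∑ b, w b = 1) :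
    (∑ b, w b * f b) ^ 2 ≤ ∑ b, w b * f b ^ 2 := by
  have := Finset.sum_sq_le_sum_mul_sum_of_sq_le_mul Finset.univ (r := fun b => w b * f b)
    (f := w) (g := fun b => w b * f b ^ 2) (fun b _ => h0 b)
    (fun b _ => mul_nonneg (h0 b) (sq_nonneg _)) (fun b _ => le_of_eq (by ring))
  rwa [h1, one_mul] at this

/-- abstract core -/
theorem core (M : MDP S A) (π d : S → A → ℝ) (ε : ℝ) (hπ : IsPolicy π) (hεpos : 0 < ε)
    (hε : ∀ s a, ε ≤ π s a) (h g : S → ℝ)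
    (hg : ∀ s, |g s| ≤ M.horizon / 2 * ∑ a, |d s a|)
    (hh : ∀ s, h s = g s + M.gamma * ∑ a, π s a * ∑ x, M.P s a x * h x) :
    |M.gamma * ∑ s, M.nu π s * ∑ a, d s a * ∑ x, M.P s a x * h x| ≤
      M.horizon ^ 2 / Real.sqrt ε * ∑ s, M.nu π s * (∑ a, |d s a|) ^ 2 := by
  set ν := M.nu π with hν
  set H := M.horizon with hH
  set γ := M.gamma with hγ
  set N := ∑ s, ν s * h s ^ 2 with hN
  set D := ∑ s, ν s * (∑ a, |d s a|) ^ 2 with hD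
  set T := ∑ s, ν s * ∑ a, π s a * (∑ x, M.P s a x * h x) ^ 2 with hT
  have ν0 : ∀ s, 0 ≤ ν s := M.nu_nonneg hπ
  have γ0 : 0 < γ := M.gamma_pos
  have γ1 : γ < 1 := M.gamma_lt_one
  have H0 : 0 < H := M.horizon_pos
  have Hm : H * (1 - γ) = 1 := M.horizon_mul
  have D0 : 0 ≤ D := Finset.sum_nonneg fun s _ => mul_nonneg (ν0 s) (sq_nonneg _)
  have N0 : 0 ≤ N := Finset.sum_nonneg fun s _ => mul_nonneg (ν0 s) (sq_nonneg _)
  have T0 : 0 ≤ T := Finset.sum_nonneg fun s _ => mul_nonneg (ν0 s)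
    (Finset.sum_nonneg fun a _ => mul_nonneg (hπ.1 s a) (sq_nonneg _))
  -- γ T ≤ N
  have hTN : γ * T ≤ N := by
    have h1 := M.nu_test hπ (fun s => h s ^ 2)
    have h2 : T ≤ ∑ s, ν s * ∑ a, π s a * ∑ x, M.P s a x * h x ^ 2 :=
      Finset.sum_le_sum fun s _ => mul_le_mul_of_nonneg_left (Finset.sum_le_sum fun a _ =>
        mul_le_mul_of_nonneg_left (jensen _ _ (M.P_nonneg s a) (M.P_sum_one s a)) (hπ.1 s a)) (ν0 s)
    have h3 : 0 ≤ ∑ s, M.rho0 s * h s ^ 2 :=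
      Finset.sum_nonneg fun s _ => mul_nonneg (M.rho0_nonneg s) (sq_nonneg _)
    have h4 := mul_le_mul_of_nonneg_left h2 γ0.le
    linarith
  -- bound N
  set q := Real.sqrt γ with hq
  have q0 : 0 < q := Real.sqrt_pos.2 γ0
  have qq : q * q = γ := Real.mul_self_sqrt γ0.le
  have q1 : q < 1 := by nlinarith
  have hNb : N * (1 - q) ^ 2 ≤ (H / 2) ^ 2 * D := by
    have hp : ∀ s, (1 - q) * h s ^ 2 ≤ (H / 2) ^ 2 * (∑ a, |d s a|) ^ 2 +
        (1 - q) * (q * γ) * ∑ a, π s a * (∑ x, M.P s a x * h x) ^ 2 := by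
      intro s
      have j := jensen (π s) (fun a => ∑ x, M.P s a x * h x) (hπ.1 s) (hπ.2 s)
      set u := ∑ a, π s a * ∑ x, M.P s a x * h x
      have g2 : g s ^ 2 ≤ (H / 2) ^ 2 * (∑ a, |d s a|) ^ 2 := by
        rw [← mul_pow, ← sq_abs]
        exact pow_le_pow_left₀ (abs_nonneg _) (hg s) 2
      have k : (1 - q) * h s ^ 2 ≤ g s ^ 2 + (1 - q) * (q * γ) * u ^ 2 := by
        rw [hh s, ← qq]
        have := mul_nonneg q0.le (sq_nonneg (g s - (1 - q) * q * u))
        nlinarith [this]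
      have l := mul_le_mul_of_nonneg_left j
        (mul_nonneg (sub_pos.2 q1).le (mul_nonneg q0.le γ0.le))
      linarith
    have hsum : (1 - q) * N ≤ (H / 2) ^ 2 * D + (1 - q) * (q * γ) * T := by
      rw [hN, hD, hT, Finset.mul_sum, Finset.mul_sum, Finset.mul_sum, ← Finset.sum_add_distrib]
      exact Finset.sum_le_sum fun s _ => by
        have := mul_le_mul_of_nonneg_left (hp s) (ν0 s)
        linarith
    have := mul_le_mul_of_nonneg_left hTN (mul_nonneg (sub_pos.2 q1).le q0.le)
    nlinarith
  have hN2 : N ≤ (H ^ 2) ^ 2 * D := by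
    have e : H * (1 - q) * (1 + q) = 1 := by linear_combination Hm - H * qq
    have p : 0 < H * (1 - q) := mul_pos H0 (sub_pos.2 q1)
    have : 1 ≤ 2 * (H * (1 - q)) := by nlinarith
    have h2 : 1 ≤ (2 * (H * (1 - q))) ^ 2 := one_le_pow₀ this
    have h3 := mul_le_mul_of_nonneg_left h2 N0
    have h4 := mul_le_mul_of_nonneg_left hNb (by positivity : 0 ≤ 4 * H ^ 2)
    nlinarith
  -- Cauchy
  have hmax : ∀ s a, (∑ x, M.P s a x * h x) ^ 2 ≤
      (1 / ε) * ∑ a, π s a * (∑ x, M.P s a x * h x) ^ 2 := by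
    intro s a
    rw [one_div, inv_mul_eq_div, le_div_iff₀ hεpos]
    calc _ ≤ π s a * (∑ x, M.P s a x * h x) ^ 2 := by
          rw [mul_comm]; exact mul_le_mul_of_nonneg_right (hε s a) (sq_nonneg _)
      _ ≤ _ := Finset.single_le_sum (f := fun a => π s a * (∑ x, M.P s a x * h x) ^ 2)
          (fun i _ => mul_nonneg (hπ.1 s i) (sq_nonneg _)) (Finset.mem_univ a)
  set W : S → ℝ := fun s => ∑ a, π s a * (∑ x, M.P s a x * h x) ^ 2 with hW
  have W0 : ∀ s, 0 ≤ W s := fun s =>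
    Finset.sum_nonneg fun a _ => mul_nonneg (hπ.1 s a) (sq_nonneg _)
  have hin : ∀ s, (∑ a, d s a * ∑ x, M.P s a x * h x) ^ 2 ≤
      (∑ a, |d s a|) ^ 2 * ((1 / ε) * W s) := by
    intro s
    have b : |∑ a, d s a * ∑ x, M.P s a x * h x| ≤
        (∑ a, |d s a|) * Real.sqrt ((1 / ε) * W s) := by
      rw [Finset.sum_mul]
      refine (Finset.abs_sum_le_sum_abs _ _).trans (Finset.sum_le_sum fun a _ => ?_)
      rw [abs_mul]
      exact mul_le_mul_of_nonneg_left (Real.abs_le_sqrt (hmax s a)) (abs_nonneg _)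
    rw [← sq_abs, ← Real.sq_sqrt (by have := W0 s; positivity : 0 ≤ (1 / ε) * W s), ← mul_pow]
    exact pow_le_pow_left₀ (abs_nonneg _) b 2
  have hCS : (∑ s, ν s * ∑ a, d s a * ∑ x, M.P s a x * h x) ^ 2 ≤ D * (1 / ε * T) := by
    have eT : 1 / ε * T = ∑ s, ν s * (1 / ε * W s) := by
      rw [hT, Finset.mul_sum]; exact Finset.sum_congr rfl fun s _ => by rw [hW]; ring
    rw [eT, hD]
    refine Finset.sum_sq_le_sum_mul_sum_of_sq_le_mul Finset.univ
      (fun s _ => mul_nonneg (ν0 s) (sq_nonneg _))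
      (fun s _ => mul_nonneg (ν0 s) (mul_nonneg (by positivity) (W0 s))) (fun s _ => ?_)
    have := mul_le_mul_of_nonneg_left (hin s) (sq_nonneg (ν s))
    linarith
  have hs0 : 0 < Real.sqrt ε := Real.sqrt_pos.2 hεpos
  refine abs_le_of_sq_le_sq ?_ (by positivity)
  have f1 : γ ^ 2 * T ≤ (H ^ 2) ^ 2 * D := by nlinarith
  have f2 : (H ^ 2 / Real.sqrt ε * D) ^ 2 = D * (1 / ε * ((H ^ 2) ^ 2 * D)) := by
    rw [mul_pow, div_pow, Real.sq_sqrt hεpos.le]; ring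
  rw [f2, mul_pow]
  calc _ ≤ γ ^ 2 * (D * (1 / ε * T)) := mul_le_mul_of_nonneg_left hCS (sq_nonneg _)
    _ = D * (1 / ε * (γ ^ 2 * T)) := by ring
    _ ≤ _ := by gcongr

/-- Lemma: local smoothness of the value function. -/
theorem value_local_smoothness [Nonempty S] [Nonempty A]
    (M : MDP S A) (π πt : S → A → ℝ) (ε : ℝ)
    (hπ : IsPolicy π) (hπt : IsPolicy πt)
    (hε : ε = ⨅ sa : S × A, π sa.1 sa.2) (hεpos : 0 < ε) :
    |M.value πt - M.value π -
        innerSA (M.gradV π) (fun s a => πt s a - π s a)| ≤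
      min
        (M.horizon ^ 3 / Real.sqrt ε *
          (wnorm1 (M.occ π) (fun s a => πt s a - π s a)) ^ 2)
        ((Fintype.card A : ℝ) * M.horizon ^ 3 / Real.sqrt ε *
          (wnorm2 (M.occ π) (fun s a => πt s a - π s a)) ^ 2) := by
  have hεle : ∀ s a, ε ≤ π s a := by
    intro s a
    rw [hε]
    exact ciInf_le (Set.finite_range _).bddBelow ((s, a) : S × A)
  have hm := M.horizon_mul
  have H0 := M.horizon_pos
  have hν : ∀ s, M.horizon * M.occ π s = M.nu π s := by
    intro s; rw [M.occ_eq, ← mul_assoc, hm, one_mul]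
  have hocc : ∀ s, 0 ≤ M.occ π s := fun s =>
    mul_nonneg (sub_pos.2 M.gamma_lt_one).le (M.nu_nonneg hπ s)
  set d : S → A → ℝ := fun s a => πt s a - π s a with hd
  set h : S → ℝ := fun s => M.valueAt πt s - M.valueAt π s with hh
  set g : S → ℝ := fun s => ∑ a, d s a * M.Qfun πt s a with hgdef
  have hQ : ∀ s a, M.Qfun πt s a - M.Qfun π s a = M.gamma * ∑ x, M.P s a x * h x := by
    intro s a
    simp only [MDP.Qfun, hh, mul_sub, Finset.sum_sub_distrib]
    ring
  have hheq : ∀ s, h s = g s + M.gamma * ∑ a, π s a * ∑ x, M.P s a x * h x := by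
    intro s
    rw [Finset.mul_sum]
    simp only [hgdef]
    rw [← Finset.sum_add_distrib]
    simp only [hh]
    rw [M.bellman hπt, M.bellman hπ, ← Finset.sum_sub_distrib]
    refine Finset.sum_congr rfl fun a _ => ?_
    have := hQ s a
    simp only [hh] at this
    rw [mul_left_comm, ← this, hd]
    ring
  have hg : ∀ s, |g s| ≤ M.horizon / 2 * ∑ a, |d s a| := fun s =>
    half_bound _ _ _ (M.Q_nonneg hπt s) (M.Q_le hπt s)
      (by simp only [hd, Finset.sum_sub_distrib, hπ.2, hπt.2, sub_self])
  have hcore := core M π d ε hπ hεpos hεle h g hg hheq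
  have hval : M.value πt - M.value π = ∑ s, M.nu π s * g s := by
    have e1 : M.value πt - M.value π = ∑ s, M.rho0 s * h s := by
      unfold MDP.value
      rw [M.valueFrom_lin hπt, M.valueFrom_lin hπ, ← Finset.sum_sub_distrib]
      exact Finset.sum_congr rfl fun s _ => by simp only [hh]; ring
    have e2 := M.nu_test hπ h
    have e3 : ∑ s, M.nu π s * h s = ∑ s, M.nu π s * g s +
        M.gamma * ∑ s, M.nu π s * ∑ a, π s a * ∑ x, M.P s a x * h x := by
      rw [Finset.mul_sum, ← Finset.sum_add_distrib]
      refine Finset.sum_congr rfl fun s _ => ?_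
      conv_lhs => rw [hheq s]
      ring
    linarith
  have herr : M.value πt - M.value π - innerSA (M.gradV π) d =
      M.gamma * ∑ s, M.nu π s * ∑ a, d s a * ∑ x, M.P s a x * h x := by
    rw [hval]
    unfold innerSA MDP.gradV
    rw [← Finset.sum_sub_distrib, Finset.mul_sum]
    refine Finset.sum_congr rfl fun s _ => ?_
    simp only [hν, hgdef]
    rw [Finset.mul_sum, ← Finset.sum_sub_distrib, Finset.mul_sum, Finset.mul_sum]
    refine Finset.sum_congr rfl fun a _ => ?_
    have := hQ s a
    linear_combination (M.nu π s * d s a) * this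
  have h1 : (wnorm1 (M.occ π) d) ^ 2 = ∑ s, M.occ π s * (∑ a, |d s a|) ^ 2 :=
    Real.sq_sqrt (Finset.sum_nonneg fun s _ => mul_nonneg (hocc s) (sq_nonneg _))
  have h2 : (wnorm2 (M.occ π) d) ^ 2 = ∑ s, M.occ π s * ∑ a, (d s a) ^ 2 :=
    Real.sq_sqrt (Finset.sum_nonneg fun s _ => mul_nonneg (hocc s)
      (Finset.sum_nonneg fun a _ => sq_nonneg _))
  have hs0 : 0 < Real.sqrt ε := Real.sqrt_pos.2 hεpos
  have hA : |M.value πt - M.value π - innerSA (M.gradV π) d| ≤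
      M.horizon ^ 3 / Real.sqrt ε * (wnorm1 (M.occ π) d) ^ 2 := by
    rw [herr, h1]
    refine hcore.trans (le_of_eq ?_)
    simp_rw [← hν, mul_assoc, ← Finset.mul_sum]
    ring
  refine le_min hA (hA.trans ?_)
  have h12 : (wnorm1 (M.occ π) d) ^ 2 ≤ (Fintype.card A : ℝ) * (wnorm2 (M.occ π) d) ^ 2 := by
    rw [h1, h2, Finset.mul_sum]
    refine Finset.sum_le_sum fun s _ => ?_
    have := sq_sum_le_card_mul_sum_sq (s := Finset.univ) (f := fun a => |d s a|)
    simp only [sq_abs, Finset.card_univ] at this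
    have := mul_le_mul_of_nonneg_left this (hocc s)
    linarith
  have := mul_le_mul_of_nonneg_left h12 (by positivity : 0 ≤ M.horizon ^ 3 / Real.sqrt ε)
  refine this.trans (le_of_eq ?_)
  ring
end
end

section
/- Generic closure implies VGD: let Π be a policy class, π ∈ Π a policy, and v ∈ Δ(S × A) a state-action probability measure with v(s,a) > 0 for all (s,a). Let π⋆ := argmin over all policies in Δ(A)^S of V, and μ⋆ := μ^{π⋆}. Suppose there exist π⁺ ∈ Π and Q̂^π ∈ ℝ^{S×A} such that: (i) E_{s∼μ^π} ⟨Q̂^π_s, π⁺_s⟩ ≤ E_{s∼μ^π} min_a Q̂^π_{s,a} + ε_greedy; (ii) E_{s,a∼v}[(Q̂^π_{s,a} − Q^π_{s,a})²] ≤ ε_approx; (iii) E_{s,a∼v}[(μ̃(s) π̃_{s,a} / v(s,a))²] ≤ C_v for every π̃ ∈ {π, π⁺, π⋆} and μ̃ ∈ {μ^π, μ⋆}. Then V(π) − V⋆ ≤ ‖μ⋆/μ^π‖_∞ · max_{π̃∈Π} ⟨∇V(π), π − π̃⟩ + H ‖μ⋆/μ^π‖_∞ (ε_greedy + 4√(C_v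 ε_approx)), where V⋆ := V(π⋆) and ‖μ⋆/μ^π‖_∞ := max_s μ⋆(s)/μ^π(s). -/
open scoped BigOperators Classical

noncomputable section

variable {S A : Type} [Fintype S] [Fintype A]

namespace VGDAux

def IsDist (d : S → ℝ) : Prop := (∀ s, 0 ≤ d s) ∧ ∑ s, d s = 1

lemma isDist_delta (s : S) : IsDist (fun s' : S => if s' = s then (1:ℝ) else 0) := by
  refine ⟨fun s' => ?_, ?_⟩
  · dsimp only; split_ifs <;> norm_num
  · simp

lemma step_sum (M : MDP S A) (π : S → A → ℝ) (d f : S → ℝ) :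
    ∑ s', M.stepDist π d s' * f s' = ∑ s, d s * ∑ a, π s a * ∑ s', M.P s a s' * f s' := by
  simp only [MDP.stepDist, Finset.sum_mul, Finset.mul_sum]
  rw [Finset.sum_comm]
  refine Finset.sum_congr rfl fun s _ => ?_
  rw [Finset.sum_comm]
  refine Finset.sum_congr rfl fun a _ => Finset.sum_congr rfl fun s' _ => ?_
  ring

lemma isDist_step (M : MDP S A) {π : S → A → ℝ} (hp : IsPolicy π) {d : S → ℝ} (hd : IsDist d) :
    IsDist (M.stepDist π d) := by
  refine ⟨fun s' => ?_, ?_⟩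
  · exact Finset.sum_nonneg fun s _ => Finset.sum_nonneg fun a _ =>
      mul_nonneg (mul_nonneg (hd.1 s) (hp.1 s a)) (M.P_nonneg s a s')
  · have := step_sum M π d (fun _ => 1)
    simpa [M.P_sum_one, hp.2, hd.2] using this

lemma distAt_succ (M : MDP S A) (π : S → A → ℝ) (ρ : S → ℝ) (t : ℕ) :
    M.distAt π ρ (t+1) = M.stepDist π (M.distAt π ρ t) := by
  simp [MDP.distAt, Function.iterate_succ_apply']

lemma distAt_succ' (M : MDP S A) (π : S → A → ℝ) (ρ : S → ℝ) (t : ℕ) :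
    M.distAt π ρ (t+1) = M.distAt π (M.stepDist π ρ) t := by
  simp [MDP.distAt, Function.iterate_succ_apply]

lemma isDist_distAt (M : MDP S A) {π : S → A → ℝ} (hp : IsPolicy π) {d : S → ℝ} (hd : IsDist d)
    (t : ℕ) : IsDist (M.distAt π d t) := by
  induction t with
  | zero => exact hd
  | succ t ih => rw [distAt_succ]; exact isDist_step M hp ih

lemma dist_le_one {d : S → ℝ} (hd : IsDist d) (s : S) : d s ≤ 1 := by
  rw [← hd.2]; exact Finset.single_le_sum (fun i _ => hd.1 i) (Finset.mem_univ s)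

lemma summ (M : MDP S A) {π : S → A → ℝ} (hp : IsPolicy π) {d : S → ℝ} (hd : IsDist d) (s : S) :
    Summable fun t : ℕ => M.gamma ^ t * M.distAt π d t s := by
  refine Summable.of_nonneg_of_le (fun t => ?_) (fun t => ?_)
    (summable_geometric_of_lt_one M.gamma_pos.le M.gamma_lt_one)
  · exact mul_nonneg (pow_nonneg M.gamma_pos.le _) ((isDist_distAt M hp hd t).1 s)
  · exact mul_le_of_le_one_right (pow_nonneg M.gamma_pos.le _)
      (dist_le_one (isDist_distAt M hp hd t) s)

lemma hs_congr {f g : ℕ → ℝ} {a b : ℝ} (h : HasSum f a) (h1 : ∀ t, g t = f t) (h2 : b = a) :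
    HasSum g b := by
  have : g = f := funext h1
  rw [this, h2]; exact h

lemma hasSum_f (M : MDP S A) {π : S → A → ℝ} (hp : IsPolicy π) {d : S → ℝ} (hd : IsDist d)
    (f : S → ℝ) :
    HasSum (fun t : ℕ => M.gamma ^ t * ∑ s, M.distAt π d t s * f s)
      (M.horizon * ∑ s, M.occFrom π d s * f s) := by
  have h := hasSum_sum (s := (Finset.univ : Finset S))
    fun s _ => ((summ M hp hd s).hasSum.mul_right (f s))
  have h1 : (1 - M.gamma) ≠ 0 := by have := M.gamma_lt_one; linarith
  refine hs_congr h (fun t => ?_) ?_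
  · rw [Finset.mul_sum]
    exact Finset.sum_congr rfl fun s _ => by ring
  · rw [Finset.mul_sum]
    refine Finset.sum_congr rfl fun s _ => ?_
    rw [MDP.occFrom, MDP.horizon]; field_simp

lemma expCost_eq (M : MDP S A) (π : S → A → ℝ) (d : S → ℝ) :
    M.expCost π d = ∑ s, d s * ∑ a, π s a * M.r s a := by
  simp only [MDP.expCost, Finset.mul_sum, mul_assoc]

lemma hasSum_value (M : MDP S A) {π : S → A → ℝ} (hp : IsPolicy π) {d : S → ℝ} (hd : IsDist d) :
    HasSum (fun t : ℕ => M.gamma ^ t * M.expCost π (M.distAt π d t)) (M.valueFrom π d) := by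
  have h := hasSum_f M hp hd (fun s => ∑ a, π s a * M.r s a)
  simp only [← expCost_eq] at h
  exact h.summable.hasSum

lemma distAt_lin (M : MDP S A) (π : S → A → ℝ) (ρ : S → ℝ) (t : ℕ) (f : S → ℝ) :
    ∑ s', M.distAt π ρ t s' * f s' =
      ∑ s, ρ s * ∑ s', M.distAt π (fun x => if x = s then 1 else 0) t s' * f s' := by
  induction t generalizing f with
  | zero => simp [MDP.distAt]
  | succ t ih =>
    simp only [distAt_succ, step_sum]
    exact ih _

lemma value_lin (M : MDP S A) {π : S → A → ℝ} (hp : IsPolicy π) {d : S → ℝ} (hd : IsDist d) :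
    M.valueFrom π d = ∑ s, d s * M.valueAt π s := by
  have h := hasSum_sum (s := (Finset.univ : Finset S))
    fun s _ => ((hasSum_value M hp (isDist_delta s)).mul_left (d s))
  refine (hasSum_value M hp hd).unique ?_
  refine hs_congr h (fun t => ?_) rfl
  rw [expCost_eq, distAt_lin, Finset.mul_sum]
  refine Finset.sum_congr rfl fun s _ => ?_
  rw [expCost_eq]; ring

lemma bellman0 (M : MDP S A) {π : S → A → ℝ} (hp : IsPolicy π) {d : S → ℝ} (hd : IsDist d) :
    M.valueFrom π d = M.expCost π d + M.gamma * M.valueFrom π (M.stepDist π d) := by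
  have h := hasSum_value M hp hd
  have h2 := (hasSum_value M hp (isDist_step M hp hd)).mul_left M.gamma
  rw [← hasSum_nat_add_iff' 1] at h
  have := h.unique (by
    refine hs_congr h2 (fun t => ?_) rfl
    rw [distAt_succ', pow_succ]; ring)
  simp [MDP.distAt] at this
  linarith

lemma bellman (M : MDP S A) {π : S → A → ℝ} (hp : IsPolicy π) (s : S) :
    M.valueAt π s = ∑ a, π s a * M.Qfun π s a := by
  have hd := isDist_delta s
  have h := bellman0 M hp hd
  rw [value_lin M hp (isDist_step M hp hd), step_sum, expCost_eq] at h
  change M.valueAt π s = _ at h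
  rw [h]
  simp only [ite_mul, one_mul, zero_mul, Finset.sum_ite_eq', Finset.mem_univ, if_true, MDP.Qfun,
    mul_add, Finset.sum_add_distrib]
  congr 1
  rw [Finset.mul_sum]
  exact Finset.sum_congr rfl fun a _ => by ring

/-- performance difference lemma -/
lemma perf_diff (M : MDP S A) {π π' : S → A → ℝ} (hp : IsPolicy π) (hp' : IsPolicy π') :
    M.value π - M.value π' =
      M.horizon * ∑ s, M.occ π' s * ∑ a, M.Qfun π s a * (π s a - π' s a) := by
  have hd : IsDist M.rho0 := ⟨M.rho0_nonneg, M.rho0_sum_one⟩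
  have h1 := hasSum_f M hp' hd (fun s => ∑ a, π' s a * M.Qfun π s a)
  have h2 := hasSum_f M hp' hd (M.valueAt π)
  have h3 := h2
  rw [← hasSum_nat_add_iff' 1] at h3
  have h4 := (h1.sub h3).unique (by
    refine hs_congr (hasSum_value M hp' hd) (fun t => ?_) rfl
    rw [distAt_succ, step_sum, expCost_eq, pow_succ, mul_assoc, ← mul_sub, Finset.mul_sum,
      ← Finset.sum_sub_distrib]
    congr 1
    refine Finset.sum_congr rfl fun s _ => ?_
    simp only [MDP.Qfun, mul_add, Finset.sum_add_distrib]
    have : ∑ a, π' s a * (M.gamma * ∑ s', M.P s a s' * M.valueAt π s') =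
        M.gamma * ∑ a, π' s a * ∑ s', M.P s a s' * M.valueAt π s' := by
      rw [Finset.mul_sum]
      exact Finset.sum_congr rfl fun a _ => by ring
    rw [this]; ring)
  have h5 : M.value π = ∑ s, M.rho0 s * M.valueAt π s := value_lin M hp hd
  simp [MDP.distAt] at h4
  rw [← h5] at h4
  have h6 : M.value π' = M.valueFrom π' M.rho0 := rfl
  have h7 : ∑ s, M.occ π' s * ∑ a, M.Qfun π s a * (π s a - π' s a) =
      ∑ s, M.occFrom π' M.rho0 s * M.valueAt π s -
      ∑ s, M.occFrom π' M.rho0 s * ∑ a, π' s a * M.Qfun π s a := by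
    rw [← Finset.sum_sub_distrib]
    refine Finset.sum_congr rfl fun s _ => ?_
    rw [bellman M hp, ← mul_sub, ← Finset.sum_sub_distrib, MDP.occ]
    congr 1
    exact Finset.sum_congr rfl fun a _ => by ring
  rw [h7, h6, mul_sub]
  linarith

lemma horizon_pos (M : MDP S A) : 0 < M.horizon := by
  have := M.gamma_lt_one
  exact one_div_pos.2 (by linarith)

lemma isDist_occ (M : MDP S A) {π : S → A → ℝ} (hp : IsPolicy π) : IsDist (M.occ π) := by
  have hd : IsDist M.rho0 := ⟨M.rho0_nonneg, M.rho0_sum_one⟩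
  have hg := M.gamma_lt_one
  refine ⟨fun s => mul_nonneg (by linarith) (tsum_nonneg fun t => ?_), ?_⟩
  · exact mul_nonneg (pow_nonneg M.gamma_pos.le _) ((isDist_distAt M hp hd t).1 s)
  · have h := hasSum_f M hp hd (fun _ => 1)
    simp only [mul_one, (isDist_distAt M hp hd _).2] at h
    have := h.unique (hasSum_geometric_of_lt_one M.gamma_pos.le hg)
    rw [MDP.horizon] at this
    have h1 : (1 - M.gamma) ≠ 0 := by linarith
    field_simp at this
    exact this

lemma cs (v w e : S → A → ℝ) (hv : ∀ s a, 0 < v s a) (C ε : ℝ)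
    (h1 : ∑ s, ∑ a, v s a * (w s a / v s a) ^ 2 ≤ C)
    (h2 : ∑ s, ∑ a, v s a * (e s a) ^ 2 ≤ ε) :
    |∑ s, ∑ a, w s a * e s a| ≤ √(C * ε) := by
  have key : (∑ p : S × A, w p.1 p.2 * e p.1 p.2) ^ 2 ≤
      (∑ p : S × A, v p.1 p.2 * (w p.1 p.2 / v p.1 p.2) ^ 2) *
      (∑ p : S × A, v p.1 p.2 * (e p.1 p.2) ^ 2) := by
    refine Finset.sum_sq_le_sum_mul_sum_of_sq_eq_mul _ (fun p _ => ?_) (fun p _ => ?_)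
      (fun p _ => ?_)
    · exact mul_nonneg (hv _ _).le (sq_nonneg _)
    · exact mul_nonneg (hv _ _).le (sq_nonneg _)
    · have := (hv p.1 p.2).ne'
      field_simp
  simp only [Fintype.sum_prod_type] at key
  refine Real.abs_le_sqrt (key.trans ?_)
  have n1 : 0 ≤ ∑ s, ∑ a, v s a * (w s a / v s a) ^ 2 :=
    Finset.sum_nonneg fun s _ => Finset.sum_nonneg fun a _ => mul_nonneg (hv _ _).le (sq_nonneg _)
  have n2 : 0 ≤ ∑ s, ∑ a, v s a * (e s a) ^ 2 :=
    Finset.sum_nonneg fun s _ => Finset.sum_nonneg fun a _ => mul_nonneg (hv _ _).le (sq_nonneg _)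
  exact mul_le_mul h1 h2 n2 (n1.trans h1)

lemma policy_le_one {π : S → A → ℝ} (hp : IsPolicy π) (s : S) (a : A) : π s a ≤ 1 := by
  rw [← hp.2 s]; exact Finset.single_le_sum (fun i _ => hp.1 s i) (Finset.mem_univ a)

lemma bdd (PC : Set (S → A → ℝ)) (hpol : ∀ π' ∈ PC, IsPolicy π') (g π : S → A → ℝ) :
    BddAbove ((fun πt => innerSA g (fun s a => π s a - πt s a)) '' PC) := by
  refine ⟨∑ s, ∑ a, (g s a * π s a + |g s a|), ?_⟩
  rintro _ ⟨πt, ht, rfl⟩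
  refine Finset.sum_le_sum fun s _ => Finset.sum_le_sum fun a _ => ?_
  have h0 := (hpol _ ht).1 s a
  have h1 := policy_le_one (hpol _ ht) s a
  have := neg_abs_le (g s a)
  have := abs_nonneg (g s a)
  nlinarith

/-- expectation of `⟨q, p⟩` under `μ` -/
def ex (μ : S → ℝ) (q p : S → A → ℝ) : ℝ := ∑ s, μ s * ∑ a, q s a * p s a

end VGDAux

open VGDAux

/-- Lemma: generic closure implies VGD. -/
theorem generic_closure_implies_vgd [Nonempty S] [Nonempty A]
    (M : MDP S A) (PC : Set (S → A → ℝ)) (π πplus πstar : S → A → ℝ)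
    (v : S → A → ℝ) (Qhat : S → A → ℝ)
    (epsgreedy epsapprox Cv : ℝ)
    (hpol : ∀ π' ∈ PC, IsPolicy π')
    (hπ : π ∈ PC) (hπplus : πplus ∈ PC)
    (hv : (∀ s a, 0 < v s a) ∧ ∑ s, ∑ a, v s a = 1)
    (hstar : IsPolicy πstar ∧ ∀ π', IsPolicy π' → M.value πstar ≤ M.value π')
    (hocc : ∀ s, 0 < M.occ π s)
    -- (i) approximate greedification
    (hgreedy : ∑ s, M.occ π s * innerA (Qhat s) (πplus s) ≤
      ∑ s, M.occ π s * (⨅ a, Qhat s a) + epsgreedy)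
    -- (ii) critic approximation error under v
    (happrox : ∑ s, ∑ a, v s a * (Qhat s a - M.Qfun π s a) ^ 2 ≤ epsapprox)
    -- (iii) v-concentrability
    (hconc : ∀ πt ∈ ({π, πplus, πstar} : Set (S → A → ℝ)),
      ∀ μt ∈ ({M.occ π, M.occ πstar} : Set (S → ℝ)),
        ∑ s, ∑ a, v s a * (μt s * πt s a / v s a) ^ 2 ≤ Cv) :
    M.value π - M.value πstar ≤
      (⨆ s, M.occ πstar s / M.occ π s) *
          sSup ((fun πt => innerSA (M.gradV π)
            (fun s a => π s a - πt s a)) '' PC) +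
        M.horizon * (⨆ s, M.occ πstar s / M.occ π s) *
          (epsgreedy + 4 * Real.sqrt (Cv * epsapprox)) := by
  have hp := hpol _ hπ
  have hpp := hpol _ hπplus
  have hps := hstar.1
  have hH := horizon_pos M
  have d1 := isDist_occ M hp
  have d2 := isDist_occ M hps
  set D := ⨆ s, M.occ πstar s / M.occ π s with hD
  set G := sSup ((fun πt => innerSA (M.gradV π) (fun s a => π s a - πt s a)) '' PC) with hG
  set R := √(Cv * epsapprox) with hR
  have hR0 : 0 ≤ R := Real.sqrt_nonneg _
  have hDs : ∀ s, M.occ πstar s ≤ D * M.occ π s := fun s => by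
    have : M.occ πstar s / M.occ π s ≤ D :=
      le_ciSup (f := fun s => M.occ πstar s / M.occ π s) (Set.finite_range _).bddAbove s
    rwa [div_le_iff₀ (hocc s)] at this
  have hD1 : 1 ≤ D := by
    have := Finset.sum_le_sum fun s (_ : s ∈ Finset.univ) => hDs s
    rwa [← Finset.mul_sum, d1.2, d2.2, mul_one] at this
  -- critic errors
  have err : ∀ μ ∈ ({M.occ π, M.occ πstar} : Set (S → ℝ)),
      ∀ p ∈ ({π, πplus, πstar} : Set (S → A → ℝ)),
      |ex μ Qhat p - ex μ (M.Qfun π) p| ≤ R := by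
    intro μ hμ p hpm
    have h := cs v (fun s a => μ s * p s a) (fun s a => Qhat s a - M.Qfun π s a) hv.1 Cv epsapprox
      (hconc p hpm μ hμ) happrox
    convert h using 2
    simp only [ex]
    rw [← Finset.sum_sub_distrib]
    refine Finset.sum_congr rfl fun s _ => ?_
    rw [← mul_sub, ← Finset.sum_sub_distrib, Finset.mul_sum]
    exact Finset.sum_congr rfl fun a _ => by ring
  have exsub : ∀ (μ : S → ℝ) (q p p' : S → A → ℝ),
      ∑ s, μ s * ∑ a, q s a * (p s a - p' s a) = ex μ q p - ex μ q p' := by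
    intro μ q p p'
    simp only [ex]
    rw [← Finset.sum_sub_distrib]
    refine Finset.sum_congr rfl fun s _ => ?_
    rw [← mul_sub, ← Finset.sum_sub_distrib]
    congr 1
    exact Finset.sum_congr rfl fun a _ => by ring
  have hinf : ∀ p : S → A → ℝ, IsPolicy p → ∀ s, (⨅ a, Qhat s a) ≤ ∑ a, Qhat s a * p s a := by
    intro p hpq s
    calc (⨅ a, Qhat s a) = ∑ a, (⨅ a, Qhat s a) * p s a := by
          rw [← Finset.mul_sum, hpq.2, mul_one]
      _ ≤ _ := Finset.sum_le_sum fun a _ => mul_le_mul_of_nonneg_right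
          (ciInf_le (Set.finite_range _).bddBelow a) (hpq.1 s a)
  have e1 := abs_le.1 (err (M.occ π) (by simp) π (by simp))
  have e2 := abs_le.1 (err (M.occ π) (by simp) πplus (by simp))
  have e3 := abs_le.1 (err (M.occ πstar) (by simp) π (by simp))
  have e4 := abs_le.1 (err (M.occ πstar) (by simp) πstar (by simp))
  have pd := perf_diff M hp hps
  rw [exsub] at pd
  have step1 : ex (M.occ πstar) Qhat π - ex (M.occ πstar) Qhat πstar ≤
      D * (ex (M.occ π) Qhat π - ∑ s, M.occ π s * (⨅ a, Qhat s a)) := by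
    simp only [ex]
    rw [← Finset.sum_sub_distrib, ← Finset.sum_sub_distrib, Finset.mul_sum]
    refine Finset.sum_le_sum fun s _ => ?_
    have a1 := hinf π hp s
    have a2 := hinf πstar hps s
    have a3 := mul_le_mul_of_nonneg_left a2 (d2.1 s)
    have a4 := mul_le_mul_of_nonneg_right (hDs s) (sub_nonneg.2 a1)
    linarith
  have hgr : ex (M.occ π) Qhat πplus ≤ ∑ s, M.occ π s * (⨅ a, Qhat s a) + epsgreedy := hgreedy
  have step2 : M.horizon * (ex (M.occ π) (M.Qfun π) π - ex (M.occ π) (M.Qfun π) πplus) ≤ G := by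
    refine le_trans (le_of_eq ?_) (le_csSup (bdd PC hpol (M.gradV π) π) ⟨πplus, hπplus, rfl⟩)
    rw [← exsub]
    simp only [innerSA, MDP.gradV, Finset.mul_sum]
    exact Finset.sum_congr rfl fun s _ => Finset.sum_congr rfl fun a _ => by ring
  have step3 : ex (M.occ πstar) (M.Qfun π) π - ex (M.occ πstar) (M.Qfun π) πstar ≤
      D * ((ex (M.occ π) (M.Qfun π) π - ex (M.occ π) (M.Qfun π) πplus) + epsgreedy + 2 * R)
        + 2 * R := by
    have : D * (ex (M.occ π) Qhat π - ∑ s, M.occ π s * (⨅ a, Qhat s a)) ≤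
      D * ((ex (M.occ π) (M.Qfun π) π - ex (M.occ π) (M.Qfun π) πplus) + epsgreedy + 2 * R) :=
      mul_le_mul_of_nonneg_left (by linarith) (by linarith)
    linarith
  rw [pd]
  have s4 := mul_le_mul_of_nonneg_left step3 hH.le
  have s5 := mul_le_mul_of_nonneg_left step2 (by linarith : 0 ≤ D)
  have s6 : 0 ≤ M.horizon * ((D - 1) * (2 * R)) :=
    mul_nonneg hH.le (mul_nonneg (by linarith) (by linarith))
  linarith
end
end

section
/- Bregman proximal step descent: let ‖·‖ be a norm and x ∈ X a point such that |f(y) − f(x) − ⟨∇f(x), y−x⟩| ≤ (β/2)‖y−x‖² for all y ∈ X. Assume: (1) 0 < η ≤ 1/(2β); (2) h : ℝ^d → ℝ is 1-strongly convex and has an L_h-Lipschitz gradient w.r.t. ‖·‖; (3) ‖ĝ(x) − ∇f(x)‖_* ≤ ε_grad. Then for any x⁺ ∈ T_η^{ε_opt}(x; h): f(x⁺) ≤ f(x) − (η/(2L_h²)) ‖G_η(x, x⁺; h)‖_*² + η ε_grad ‖G_η(x, x⁺; h)‖_* + ε_opt. -/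
open scoped BigOperators

noncomputable section

/-- Standard inner product on `ℝ^d`. -/
def dotd {d : ℕ} (u v : Fin d → ℝ) : ℝ := ∑ i, u i * v i

/-- `N` is a norm on `ℝ^d`. -/
def IsNorm {d : ℕ} (N : (Fin d → ℝ) → ℝ) : Prop :=
  (∀ x, 0 ≤ N x) ∧ (∀ x, N x = 0 ↔ x = 0) ∧
    (∀ (c : ℝ) (x : Fin d → ℝ), N (c • x) = |c| * N x) ∧ ∀ x y, N (x + y) ≤ N x + N y

/-- The dual norm of `N`. -/
def dualNorm {d : ℕ} (N : (Fin d → ℝ) → ℝ) (z : Fin d → ℝ) : ℝ :=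
  sSup ((fun u => dotd z u) '' {u | N u ≤ 1})

/-- Bregman divergence of `h` whose gradient is `gh`. -/
def breg {d : ℕ} (h : (Fin d → ℝ) → ℝ) (gh : (Fin d → ℝ) → Fin d → ℝ)
    (u v : Fin d → ℝ) : ℝ :=
  h u - h v - dotd (gh v) (u - v)

/-- Bregman gradient mapping `G_η(x, x⁺; h) = (1/η)(∇h(x) − ∇h(x⁺))`. -/
def Gmap {d : ℕ} (gh : (Fin d → ℝ) → Fin d → ℝ) (η : ℝ) (x xp : Fin d → ℝ) :
    Fin d → ℝ :=
  (1 / η) • (gh x - gh xp)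

/-- The set `T_η^{εopt}(x; h)` of `εopt`-approximate Bregman proximal updates at `x`,
for gradient estimate `g = ĝ(x)`. -/
def proxSet {d : ℕ} (X : Set (Fin d → ℝ)) (g : Fin d → ℝ)
    (gh : (Fin d → ℝ) → Fin d → ℝ) (η εopt : ℝ) (x : Fin d → ℝ) :
    Set (Fin d → ℝ) :=
  {xp | xp ∈ X ∧ ∀ z ∈ X, dotd (g + (1 / η) • (gh xp - gh x)) (z - xp) ≥ -εopt}

theorem aux_bdd {E : Type} [AddCommGroup E] [Module ℝ E] [FiniteDimensional ℝ E]
    (N : E → ℝ) (h0 : ∀ x, 0 ≤ N x) (h1 : ∀ x, N x = 0 ↔ x = 0)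
    (h2 : ∀ (c : ℝ) (x : E), N (c • x) = |c| * N x) (h3 : ∀ x y, N (x + y) ≤ N x + N y)
    (L : E →ₗ[ℝ] ℝ) : ∃ C, 0 ≤ C ∧ ∀ u, L u ≤ C * N u := by
  letI : Norm E := ⟨N⟩
  have core : NormedSpace.Core ℝ E :=
    { norm_nonneg := h0
      norm_smul := h2
      norm_triangle := h3
      norm_eq_zero_iff := h1 }
  letI : NormedAddCommGroup E := NormedAddCommGroup.ofCore core
  letI : NormedSpace ℝ E := NormedSpace.ofCore core
  refine ⟨‖LinearMap.toContinuousLinearMap L‖, norm_nonneg _, fun u => ?_⟩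
  exact (le_abs_self _).trans ((LinearMap.toContinuousLinearMap L).le_opNorm u)

theorem dotd_eq {d : ℕ} (u v : Fin d → ℝ) : dotd u v = u ⬝ᵥ v := rfl

theorem dual_bdd {d : ℕ} (N : (Fin d → ℝ) → ℝ) (hN : IsNorm N) (z : Fin d → ℝ) :
    BddAbove ((fun u => dotd z u) '' {u | N u ≤ 1}) := by
  obtain ⟨h0, h1, h2, h3⟩ := hN
  obtain ⟨C, hC, h⟩ := aux_bdd N h0 h1 h2 h3 (dotProductBilin ℝ ℝ z)
  refine ⟨C, ?_⟩
  rintro _ ⟨u, hu, rfl⟩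
  have := h u
  have hu' : N u ≤ 1 := hu
  calc dotd z u ≤ C * N u := this
    _ ≤ C := by nlinarith

theorem dual_nonneg {d : ℕ} (N : (Fin d → ℝ) → ℝ) (hN : IsNorm N) (z : Fin d → ℝ) :
    0 ≤ dualNorm N z := by
  refine le_csSup (dual_bdd N hN z) ⟨0, ?_, by simp [dotd_eq]⟩
  have : N 0 = 0 := (hN.2.1 0).2 rfl
  simp [this]

theorem dual_le {d : ℕ} (N : (Fin d → ℝ) → ℝ) (hN : IsNorm N) (z u : Fin d → ℝ) :
    dotd z u ≤ dualNorm N z * N u := by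
  by_cases hu : N u = 0
  · have := (hN.2.1 u).1 hu
    subst this
    simp [dotd_eq, hu]
  have hp : 0 < N u := lt_of_le_of_ne (hN.1 u) (Ne.symm hu)
  have h : dotd z ((N u)⁻¹ • u) ≤ dualNorm N z := by
    refine le_csSup (dual_bdd N hN z) ⟨(N u)⁻¹ • u, ?_, rfl⟩
    simp only [Set.mem_setOf_eq]
    rw [hN.2.2.1, abs_of_pos (inv_pos.2 hp), inv_mul_cancel₀ hu]
  rw [dotd_eq, dotProduct_smul, smul_eq_mul, inv_mul_le_iff₀ hp] at h
  rw [dotd_eq]; linarith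

theorem dual_smul {d : ℕ} (N : (Fin d → ℝ) → ℝ) (c : ℝ) (hc : 0 ≤ c) (z : Fin d → ℝ) :
    dualNorm N (c • z) = c * dualNorm N z := by
  unfold dualNorm
  rw [← smul_eq_mul, ← Real.sSup_smul_of_nonneg hc]
  congr 1
  ext t
  simp [Set.mem_smul_set, dotd_eq]

/-- Lemma: Bregman proximal step descent. -/
theorem bregman_prox_descent (d : ℕ) (X : Set (Fin d → ℝ))
    (f : (Fin d → ℝ) → ℝ) (gradf ghat : (Fin d → ℝ) → Fin d → ℝ)
    (N : (Fin d → ℝ) → ℝ) (h : (Fin d → ℝ) → ℝ) (gh : (Fin d → ℝ) → Fin d → ℝ)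
    (beta eta Lh epsgrad epsopt : ℝ) (x xp : Fin d → ℝ)
    (hX : Convex ℝ X) (hNorm : IsNorm N) (hx : x ∈ X)
    (hsmooth : ∀ y ∈ X,
      |f y - f x - dotd (gradf x) (y - x)| ≤ beta / 2 * (N (y - x)) ^ 2)
    (hbeta : 0 < beta) (heta0 : 0 < eta) (hetabeta : eta ≤ 1 / (2 * beta))
    (hsc : ∀ u v, breg h gh u v ≥ (1 / 2) * (N (u - v)) ^ 2)
    (hLip : ∀ u v, dualNorm N (gh u - gh v) ≤ Lh * N (u - v))
    (hg : dualNorm N (ghat x - gradf x) ≤ epsgrad)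
    (hxp : xp ∈ proxSet X (ghat x) gh eta epsopt x) :
    f xp ≤ f x - eta / (2 * Lh ^ 2) * (dualNorm N (Gmap gh eta x xp)) ^ 2
      + eta * epsgrad * dualNorm N (Gmap gh eta x xp) + epsopt := by
  obtain ⟨hxpX, hz⟩ := hxp
  have hz := hz x hx
  have hs := (abs_le.1 (hsmooth xp hxpX)).2
  have hsym : N (x - xp) = N (xp - x) := by
    have := hNorm.2.2.1 (-1) (xp - x)
    simpa using this
  have b1 := hsc x xp
  have b2 := hsc xp x
  have hL := hLip x xp
  have hD := dual_le N hNorm (gh x - gh xp) (x - xp)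
  have hE := dual_le N hNorm (ghat x - gradf x) (x - xp)
  have hA := dual_nonneg N hNorm (gh x - gh xp)
  have hB := dual_nonneg N hNorm (ghat x - gradf x)
  have hn := hNorm.1 (xp - x)
  have hG : dualNorm N (Gmap gh eta x xp) = 1 / eta * dualNorm N (gh x - gh xp) :=
    dual_smul N _ (by positivity) _
  rw [hG]
  rw [hsym] at hL hD hE b1
  unfold breg at b1 b2
  generalize dualNorm N (gh x - gh xp) = A at *
  generalize dualNorm N (ghat x - gradf x) = B at *
  generalize N (xp - x) = n at *
  simp only [dotd_eq, sub_dotProduct, add_dotProduct, smul_dotProduct, dotProduct_sub,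
    smul_eq_mul] at *
  set S := gh x ⬝ᵥ x - gh x ⬝ᵥ xp - (gh xp ⬝ᵥ x - gh xp ⬝ᵥ xp) with hS
  have hSn : n ^ 2 ≤ S := by rw [hS]; linarith
  have hDS : S ≤ A * n := by rw [hS]; linarith
  have hnA : n ≤ A := by
    by_contra hc
    push Not at hc
    nlinarith
  have hcancel : eta * epsgrad * (1 / eta * A) = epsgrad * A := by field_simp
  have h1 : 1 / eta * n ^ 2 ≤ 1 / eta * S := by gcongr
  have h2 : beta * n ^ 2 ≤ 1 / eta * (n ^ 2) := by
    have : beta ≤ 1 / eta := by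
      rw [le_div_iff₀ heta0]
      rw [le_div_iff₀ (by positivity)] at hetabeta
      nlinarith
    gcongr
  have h3 : eta / (2 * Lh ^ 2) * (1 / eta * A) ^ 2 ≤ 1 / eta * n ^ 2 / 2 := by
    by_cases hLh : Lh = 0
    · subst hLh; simp; positivity
    · have : A ^ 2 ≤ Lh ^ 2 * n ^ 2 := by
        rw [← mul_pow]; gcongr
      have e : eta / (2 * Lh ^ 2) * (1 / eta * A) ^ 2 = 1 / eta * (A ^ 2 / Lh ^ 2) / 2 := by
        field_simp
      rw [e]
      have : A ^ 2 / Lh ^ 2 ≤ n ^ 2 := by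
        rw [div_le_iff₀ (by positivity)]; linarith
      gcongr
  have h4 : B * n ≤ epsgrad * A := by
    apply mul_le_mul hg hnA hn (hB.trans hg)
  rw [hcancel]
  rw [hS] at h1
  linarith
end
end

section
/- Transfer of regularity to the state-averaged regularizer: assume h : ℝ^A → ℝ is 1-strongly convex and has an L-Lipschitz gradient w.r.t. a norm ‖·‖∘ on ℝ^A. Let μ ∈ Δ(S) and define R_μ : ℝ^{S×A} → ℝ by R_μ(π) := E_{s∼μ}[h(π_s)]. Then: (1) B_{R_μ}(π, π̃) = E_{s∼μ} B_h(π_s, π̃_s) for all π, π̃; (2) R_μ is 1-strongly convex and has an L-Lipschitz gradient w.r.t. the weighted norm ‖·‖_{L²(μ),∘}. -/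
open scoped BigOperators

noncomputable section

variable {S A : Type} [Fintype S] [Fintype A]

/-- Dual norm of a norm `NN` on `ℝ^{S×A}`. -/
def dualNormSA (NN : (S → A → ℝ) → ℝ) (z : S → A → ℝ) : ℝ :=
  sSup ((fun u => innerSA z u) '' {u | NN u ≤ 1})

/-- Weighted norm `‖u‖_{L²(μ),∘} = √(Σ_s μ(s) ‖u_s‖∘²)`. -/
def wnormL2 (μ : S → ℝ) (N : (A → ℝ) → ℝ) (u : S → A → ℝ) : ℝ :=
  Real.sqrt (∑ s, μ s * (N (u s)) ^ 2)

/-- Bregman divergence on `ℝ^{S×A}` of `R` whose gradient is `gR`. -/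
def bregSA (R : (S → A → ℝ) → ℝ) (gR : (S → A → ℝ) → S → A → ℝ)
    (u v : S → A → ℝ) : ℝ :=
  R u - R v - innerSA (gR v) (u - v)

/-- State-averaged regularizer `R_μ(π) = E_{s∼μ}[h(π_s)]`. -/
def Rmu (μ : S → ℝ) (h : (A → ℝ) → ℝ) (π : S → A → ℝ) : ℝ :=
  ∑ s, μ s * h (π s)

/-- Gradient of the state-averaged regularizer: `(∇R_μ(π))_s = μ(s) ∇h(π_s)`. -/
def gradRmu (μ : S → ℝ) (gh : (A → ℝ) → A → ℝ) (π : S → A → ℝ) : S → A → ℝ :=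
  fun s a => μ s * gh (π s) a

def NSpace (A : Type) : Type := A → ℝ

instance : AddCommGroup (NSpace A) := inferInstanceAs (AddCommGroup (A → ℝ))
instance : Module ℝ (NSpace A) := inferInstanceAs (Module ℝ (A → ℝ))
instance : FiniteDimensional ℝ (NSpace A) := inferInstanceAs (FiniteDimensional ℝ (A → ℝ))

theorem exists_innerA_bound (N : (A → ℝ) → ℝ) (hN : IsNormA N) (z : A → ℝ) :
    ∃ C : ℝ, ∀ u, innerA z u ≤ C * N u := by
  obtain ⟨h0, h1, h2, h3⟩ := hN
  let G : AddGroupNorm (NSpace A) :=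
    { toFun := N
      map_zero' := (h1 0).2 rfl
      add_le' := h3
      neg' := fun x => by
        have := h2 (-1) x
        rw [abs_neg, abs_one, one_mul] at this
        rw [← this]
        exact congrArg N (neg_one_smul ℝ (x : A → ℝ)).symm
      eq_zero_of_map_eq_zero' := fun x hx => (h1 x).1 hx }
  let : NormedAddCommGroup (NSpace A) := G.toNormedAddCommGroup
  let : NormedSpace ℝ (NSpace A) := ⟨fun c x => (h2 c x).le⟩
  let f : NSpace A →ₗ[ℝ] ℝ :=
    { toFun := fun u => innerA z u
      map_add' := fun x y => by
        change ∑ a, z a * ((x : A → ℝ) a + (y : A → ℝ) a) = _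
        simp only [innerA, mul_add, Finset.sum_add_distrib]
      map_smul' := fun c x => by
        change ∑ a, z a * (c * (x : A → ℝ) a) = c * ∑ a, z a * (x : A → ℝ) a
        rw [Finset.mul_sum]
        exact Finset.sum_congr rfl fun a _ => by ring }
  let F := LinearMap.toContinuousLinearMap f
  refine ⟨‖F‖, fun u => ?_⟩
  exact (le_abs_self _).trans (F.le_opNorm u)

theorem dualA_bdd (N : (A → ℝ) → ℝ) (hN : IsNormA N) (z : A → ℝ) :
    BddAbove ((fun u => innerA z u) '' {u | N u ≤ 1}) := by
  obtain ⟨C, hC⟩ := exists_innerA_bound N hN z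
  refine ⟨|C|, ?_⟩
  rintro _ ⟨u, hu, rfl⟩
  have hu' : N u ≤ 1 := hu
  have := hN.1 u
  have h1 := hC u
  have h2 : C * N u ≤ |C| * N u := mul_le_mul_of_nonneg_right (le_abs_self C) this
  have h3 : |C| * N u ≤ |C| * 1 := mul_le_mul_of_nonneg_left hu' (abs_nonneg C)
  simp only
  linarith

theorem innerA_le_dual (N : (A → ℝ) → ℝ) (hN : IsNormA N) (z u : A → ℝ) :
    innerA z u ≤ dualNormA N z * N u := by
  by_cases h : N u = 0
  · have := (hN.2.1 u).1 h
    subst this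
    rw [h]; simp [innerA]
  have hp : 0 < N u := lt_of_le_of_ne (hN.1 u) (Ne.symm h)
  have key : innerA z ((N u)⁻¹ • u) ≤ dualNormA N z := by
    apply le_csSup (dualA_bdd N hN z)
    refine ⟨_, ?_, rfl⟩
    change N _ ≤ 1
    rw [hN.2.2.1, abs_of_pos (inv_pos.2 hp), inv_mul_cancel₀ h]
  have e : innerA z ((N u)⁻¹ • u) = (N u)⁻¹ * innerA z u := by
    simp only [innerA, Finset.mul_sum, Pi.smul_apply, smul_eq_mul]
    exact Finset.sum_congr rfl fun a _ => by ring
  rw [e, inv_mul_le_iff₀ hp] at key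
  linarith

theorem dualA_nonneg (N : (A → ℝ) → ℝ) (hN : IsNormA N) (z : A → ℝ) :
    0 ≤ dualNormA N z := by
  apply le_csSup (dualA_bdd N hN z)
  refine ⟨0, ?_, by simp [innerA]⟩
  change N 0 ≤ 1
  rw [(hN.2.1 0).2 rfl]; exact zero_le_one

theorem weighted_cs (μ : S → ℝ) (hμ : ∀ s, 0 ≤ μ s) (x y : S → ℝ) :
    ∑ s, μ s * (x s * y s) ≤
      Real.sqrt (∑ s, μ s * x s ^ 2) * Real.sqrt (∑ s, μ s * y s ^ 2) := by
  have := Real.sum_mul_le_sqrt_mul_sqrt Finset.univ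
    (fun s => Real.sqrt (μ s) * x s) (fun s => Real.sqrt (μ s) * y s)
  simp only [mul_pow, Real.sq_sqrt (hμ _)] at this
  refine le_trans (le_of_eq (Finset.sum_congr rfl fun s _ => ?_)) this
  rw [mul_mul_mul_comm, Real.mul_self_sqrt (hμ s)]

/-- Lemma: transfer of regularity to the state-averaged
regularizer. -/
theorem state_averaged_regularizer_transfer
    (μ : S → ℝ) (hμ : (∀ s, 0 ≤ μ s) ∧ ∑ s, μ s = 1)
    (N : (A → ℝ) → ℝ) (hN : IsNormA N)
    (h : (A → ℝ) → ℝ) (gh : (A → ℝ) → A → ℝ) (L : ℝ)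
    (hsc : ∀ u v, bregA h gh u v ≥ (1 / 2) * (N (u - v)) ^ 2)
    (hLip : ∀ u v, dualNormA N (gh u - gh v) ≤ L * N (u - v)) :
    -- (1) the Bregman divergence of R_μ is the state-average of that of h
    (∀ π πt : S → A → ℝ,
      bregSA (Rmu μ h) (gradRmu μ gh) π πt = ∑ s, μ s * bregA h gh (π s) (πt s)) ∧
    -- (2) R_μ is 1-strongly convex and has L-Lipschitz gradient
    -- w.r.t. ‖·‖_{L²(μ),∘}
    (∀ π πt : S → A → ℝ,
      bregSA (Rmu μ h) (gradRmu μ gh) π πt ≥ (1 / 2) * (wnormL2 μ N (π - πt)) ^ 2) ∧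
    (∀ π πt : S → A → ℝ,
      dualNormSA (wnormL2 μ N) (gradRmu μ gh π - gradRmu μ gh πt) ≤
        L * wnormL2 μ N (π - πt)) := by
  obtain ⟨hμ0, -⟩ := hμ
  have P1 : ∀ π πt : S → A → ℝ,
      bregSA (Rmu μ h) (gradRmu μ gh) π πt = ∑ s, μ s * bregA h gh (π s) (πt s) := by
    intro π πt
    simp only [bregSA, bregA, Rmu, gradRmu, innerSA, innerA, mul_sub, Finset.sum_sub_distrib,
      Finset.mul_sum, Pi.sub_apply, mul_assoc]
  refine ⟨P1, ?_, ?_⟩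
  · intro π πt
    rw [P1, wnormL2, Real.sq_sqrt (Finset.sum_nonneg fun s _ =>
      mul_nonneg (hμ0 s) (sq_nonneg _)), Finset.mul_sum]
    refine Finset.sum_le_sum fun s _ => ?_
    have := mul_le_mul_of_nonneg_left (hsc (π s) (πt s)) (hμ0 s)
    simp only [Pi.sub_apply]
    linarith
  · intro π πt
    have hLN : ∀ s, 0 ≤ L * N (π s - πt s) := fun s =>
      (dualA_nonneg N hN _).trans (hLip (π s) (πt s))
    have hin : ∀ u : S → A → ℝ, innerSA (gradRmu μ gh π - gradRmu μ gh πt) u ≤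
        L * ∑ s, μ s * (N (π s - πt s) * N (u s)) := by
      intro u
      rw [Finset.mul_sum]
      refine Finset.sum_le_sum fun s _ => ?_
      have e : ∑ a, (gradRmu μ gh π - gradRmu μ gh πt) s a * u s a =
          μ s * innerA (gh (π s) - gh (πt s)) (u s) := by
        simp only [innerA, gradRmu, Finset.mul_sum, Pi.sub_apply]
        exact Finset.sum_congr rfl fun a _ => by ring
      rw [e]
      have h1 := innerA_le_dual N hN (gh (π s) - gh (πt s)) (u s)
      have h2 := mul_le_mul_of_nonneg_right (hLip (π s) (πt s)) (hN.1 (u s))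
      have h3 := mul_le_mul_of_nonneg_left (h1.trans h2) (hμ0 s)
      linarith
    have hw : ∀ u, 0 ≤ wnormL2 μ N u := fun u => Real.sqrt_nonneg _
    rcases le_or_gt 0 L with hL | hL
    · refine Real.sSup_le ?_ (mul_nonneg hL (hw _))
      rintro _ ⟨u, hu, rfl⟩
      refine (hin u).trans (mul_le_mul_of_nonneg_left ?_ hL)
      have cs := weighted_cs μ hμ0 (fun s => N (π s - πt s)) (fun s => N (u s))
      have hu' : wnormL2 μ N u ≤ 1 := hu
      exact cs.trans (mul_le_of_le_one_right (hw (π - πt)) hu')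
    · have hz : ∀ s, N (π s - πt s) = 0 := fun s =>
        le_antisymm (by nlinarith [hLN s]) (hN.1 _)
      have hw0 : wnormL2 μ N (π - πt) = 0 := by
        simp [wnormL2, hz]
      rw [hw0, mul_zero]
      refine Real.sSup_le ?_ le_rfl
      rintro _ ⟨u, hu, rfl⟩
      simpa [hz] using hin u
end
end

section
/- Occupancy measure difference bound: for any discounted MDP M and any two policies π, π̃ : S → Δ(A): ‖μ^{π̃} − μ^π‖₁ ≤ H · ‖π̃ − π‖_{L¹(μ^π),1}, where ‖π̃ − π‖_{L¹(μ^π),1} := E_{s∼μ^π} ‖π̃_s − π_s‖₁. -/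
open scoped BigOperators Classical

noncomputable section

variable {S A : Type} [Fintype S] [Fintype A]

namespace MDP

lemma step_nonneg (M : MDP S A) {π : S → A → ℝ} (hπ : IsPolicy π) {d : S → ℝ}
    (hd : ∀ s, 0 ≤ d s) (s' : S) : 0 ≤ M.stepDist π d s' := by
  unfold stepDist
  exact Finset.sum_nonneg fun s _ => Finset.sum_nonneg fun a _ =>
    mul_nonneg (mul_nonneg (hd s) (hπ.1 s a)) (M.P_nonneg s a s')

lemma sum_kernel (M : MDP S A) (f : S → A → ℝ) :
    ∑ s', ∑ s, ∑ a, f s a * M.P s a s' = ∑ s, ∑ a, f s a := by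
  rw [Finset.sum_comm]
  refine Finset.sum_congr rfl fun s _ => ?_
  rw [Finset.sum_comm]
  refine Finset.sum_congr rfl fun a _ => ?_
  rw [← Finset.mul_sum, M.P_sum_one, mul_one]

lemma step_sum (M : MDP S A) {π : S → A → ℝ} (hπ : IsPolicy π) (d : S → ℝ) :
    ∑ s', M.stepDist π d s' = ∑ s, d s := by
  unfold stepDist
  rw [M.sum_kernel (fun s a => d s * π s a)]
  refine Finset.sum_congr rfl fun s _ => ?_
  rw [← Finset.mul_sum, hπ.2, mul_one]

lemma distAt_succ (M : MDP S A) (π : S → A → ℝ) (ρ : S → ℝ) (t : ℕ) :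
    M.distAt π ρ (t + 1) = M.stepDist π (M.distAt π ρ t) := by
  unfold distAt
  rw [Function.iterate_succ_apply']

lemma distAt_prob (M : MDP S A) {π : S → A → ℝ} (hπ : IsPolicy π) (t : ℕ) :
    (∀ s, 0 ≤ M.distAt π M.rho0 t s) ∧ ∑ s, M.distAt π M.rho0 t s = 1 := by
  induction t with
  | zero => exact ⟨M.rho0_nonneg, M.rho0_sum_one⟩
  | succ t ih =>
    rw [distAt_succ]
    exact ⟨M.step_nonneg hπ ih.1, by rw [M.step_sum hπ, ih.2]⟩

lemma distAt_summable (M : MDP S A) {π : S → A → ℝ} (hπ : IsPolicy π) (s : S) :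
    Summable fun t : ℕ => M.gamma ^ t * M.distAt π M.rho0 t s := by
  refine Summable.of_nonneg_of_le (fun t => ?_) (fun t => ?_)
    (summable_geometric_of_lt_one M.gamma_pos.le M.gamma_lt_one)
  · exact mul_nonneg (pow_nonneg M.gamma_pos.le t) ((M.distAt_prob hπ t).1 s)
  · have h1 : M.distAt π M.rho0 t s ≤ 1 := by
      rw [← (M.distAt_prob hπ t).2]
      exact Finset.single_le_sum (fun i _ => (M.distAt_prob hπ t).1 i) (Finset.mem_univ s)
    exact mul_le_of_le_one_right (pow_nonneg M.gamma_pos.le t) h1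

lemma occ_nonneg (M : MDP S A) {π : S → A → ℝ} (hπ : IsPolicy π) (s : S) :
    0 ≤ M.occ π s := by
  unfold occ occFrom
  exact mul_nonneg (sub_nonneg.2 M.gamma_lt_one.le) (tsum_nonneg fun t =>
    mul_nonneg (pow_nonneg M.gamma_pos.le t) ((M.distAt_prob hπ t).1 s))

lemma occ_bellman (M : MDP S A) {π : S → A → ℝ} (hπ : IsPolicy π) (s' : S) :
    M.occ π s' = (1 - M.gamma) * M.rho0 s' + M.gamma * M.stepDist π (M.occ π) s' := by
  have hS : HasSum (fun t : ℕ => M.gamma ^ (t + 1) * M.distAt π M.rho0 (t + 1) s')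
      (∑ s, ∑ a, (M.gamma * π s a * M.P s a s') *
        ∑' t : ℕ, M.gamma ^ t * M.distAt π M.rho0 t s) := by
    have := hasSum_sum (s := Finset.univ) fun s _ => hasSum_sum (s := Finset.univ)
      fun (a : A) _ => ((M.distAt_summable hπ s).hasSum).mul_left (M.gamma * π s a * M.P s a s')
    refine (congrArg (fun f => HasSum f _) (funext fun t => ?_)).mpr this
    rw [distAt_succ]
    unfold stepDist
    simp only [Finset.mul_sum]
    refine Finset.sum_congr rfl fun s _ => Finset.sum_congr rfl fun a _ => ?_
    ring
  have h0 := (M.distAt_summable hπ s').tsum_eq_zero_add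
  rw [hS.tsum_eq] at h0
  unfold stepDist
  simp only [occ, occFrom]
  rw [h0]
  simp only [Finset.mul_sum, mul_add]
  congr 1
  · simp [distAt]
  · refine Finset.sum_congr rfl fun s _ => Finset.sum_congr rfl fun a _ => ?_
    ring

end MDP

/-- Lemma: occupancy measure difference bound. -/
theorem occupancy_difference_bound (M : MDP S A) (π πt : S → A → ℝ)
    (hπ : IsPolicy π) (hπt : IsPolicy πt) :
    ∑ s, |M.occ πt s - M.occ π s| ≤
      M.horizon * ∑ s, M.occ π s * ∑ a, |πt s a - π s a| := by
  have hg := M.gamma_pos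
  have hg1 := M.gamma_lt_one
  set X := ∑ s, M.occ π s * ∑ a, |πt s a - π s a| with hX
  set D := ∑ s, |M.occ πt s - M.occ π s| with hD
  have hX0 : 0 ≤ X := Finset.sum_nonneg fun s _ =>
    mul_nonneg (M.occ_nonneg hπ s) (Finset.sum_nonneg fun a _ => abs_nonneg _)
  have hpt : ∀ s', |M.occ πt s' - M.occ π s'| ≤
      M.gamma * ∑ s, ∑ a, (|M.occ πt s - M.occ π s| * πt s a
        + M.occ π s * |πt s a - π s a|) * M.P s a s' := by
    intro s'
    have e : M.occ πt s' - M.occ π s' = M.gamma * ∑ s, ∑ a,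
        ((M.occ πt s - M.occ π s) * πt s a + M.occ π s * (πt s a - π s a)) * M.P s a s' := by
      rw [M.occ_bellman hπt s', M.occ_bellman hπ s', add_sub_add_left_eq_sub, ← mul_sub]
      unfold MDP.stepDist
      simp only [← Finset.sum_sub_distrib]
      congr 1
      refine Finset.sum_congr rfl fun s _ => Finset.sum_congr rfl fun a _ => ?_
      ring
    rw [e, abs_mul, abs_of_pos hg]
    refine mul_le_mul_of_nonneg_left ?_ hg.le
    refine (Finset.abs_sum_le_sum_abs _ _).trans (Finset.sum_le_sum fun s _ => ?_)
    refine (Finset.abs_sum_le_sum_abs _ _).trans (Finset.sum_le_sum fun a _ => ?_)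
    rw [abs_mul, abs_of_nonneg (M.P_nonneg s a s')]
    refine mul_le_mul_of_nonneg_right ?_ (M.P_nonneg s a s')
    refine (abs_add_le _ _).trans (le_of_eq ?_)
    rw [abs_mul, abs_mul, abs_of_nonneg (hπt.1 s a), abs_of_nonneg (M.occ_nonneg hπ s)]
  have key : D ≤ M.gamma * (D + X) := by
    refine (Finset.sum_le_sum fun s' _ => hpt s').trans (le_of_eq ?_)
    rw [← Finset.mul_sum, M.sum_kernel (fun s a => |M.occ πt s - M.occ π s| * πt s a
        + M.occ π s * |πt s a - π s a|)]
    congr 1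
    simp only [Finset.sum_add_distrib, ← Finset.mul_sum, hπt.2, mul_one]
    rfl
  unfold MDP.horizon
  rw [one_div, ← div_eq_inv_mul, le_div_iff₀ (by linarith)]
  nlinarith
end
end
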